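/- Assume N^{−1/2} ≪ ε_N ≪ N^{−1/3}. Then (Z_N/(2πN)^{d/2}) · 2πN · e^{N F(z)} · D_N(V_N; B_N) = [1 + o_N(1)] · μ/√(−det Hess F(z)) as N → ∞. -/

import Mathlib

open Real Filter Topology MeasureTheory RealInnerProductSpace
open scoped Classical

noncomputable section

namespace RWPotential

variable {d : ℕ}

/-- The ambient Euclidean space `ℝ^d`. -/
abbrev E (d : ℕ) := EuclideanSpace ℝ (Fin d)

/-- `x` belongs to the rescaled lattice `N⁻¹ ℤ^d`. -/
def IsLatticePoint (N : ℕ) (x : E d) : Prop := ∀ i, ∃ k : ℤ, x i = (k : ℝ) / N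

/-- The discretization `Ξ_N = Ξ ∩ (N⁻¹ ℤ^d)`. -/
def disc (Ξ : Set (E d)) (N : ℕ) : Set (E d) := {x ∈ Ξ | IsLatticePoint N x}

/-- The partition function `Z_N = Σ_{x ∈ Ξ_N} e^{-N F(x)}`. -/
def Z (Ξ : Set (E d)) (F : E d → ℝ) (N : ℕ) : ℝ :=
  ∑' x : disc Ξ N, Real.exp (-(N : ℝ) * F x)

/-- The Gibbs measure `μ_N(x) = Z_N⁻¹ e^{-N F(x)}`. -/
def gibbs (Ξ : Set (E d)) (F : E d → ℝ) (N : ℕ) (x : E d) : ℝ :=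
  Real.exp (-(N : ℝ) * F x) / Z Ξ F N

/-- The measure of a set `A ⊂ Ξ_N`. -/
def gibbsSet (Ξ : Set (E d)) (F : E d → ℝ) (N : ℕ) (A : Set (E d)) : ℝ :=
  ∑' x : A, gibbs Ξ F N (x : E d)

/-- The jump rates `R_N(x,y) = e^{-(1/2) N [F(y)-F(x)]}` for nearest neighbours of `Ξ_N`. -/
def rate (Ξ : Set (E d)) (F : E d → ℝ) (N : ℕ) (x y : E d) : ℝ :=
  if x ∈ disc Ξ N ∧ y ∈ disc Ξ N ∧ ‖y - x‖ = 1 / N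
  then Real.exp (-(N : ℝ) / 2 * (F y - F x)) else 0

/-- The holding rates `λ_N(x) = Σ_y R_N(x,y)`. -/
def lam (Ξ : Set (E d)) (F : E d → ℝ) (N : ℕ) (x : E d) : ℝ := ∑' y : E d, rate Ξ F N x y

/-- The capacity `Cap_N(A,B) = Σ_{x ∈ A} μ_N(x) λ_N(x) P_x[H_B < H⁺_A]`, expressed in terms of
the family `hit` of hitting probabilities of the chain, `hit N x A B = P_x[H_B < H⁺_A]`. -/
def cap (Ξ : Set (E d)) (F : E d → ℝ)
    (hit : ℕ → E d → Set (E d) → Set (E d) → ℝ) (N : ℕ) (A B : Set (E d)) : ℝ :=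
  ∑' x : A, gibbs Ξ F N (x : E d) * lam Ξ F N (x : E d) * hit N (x : E d) A B

/-- The Hessian matrix of `F` at `z`. -/
def hess (F : E d → ℝ) (z : E d) : Matrix (Fin d) (Fin d) ℝ :=
  fun i j => iteratedFDeriv ℝ 2 F z ![EuclideanSpace.single i (1:ℝ), EuclideanSpace.single j (1:ℝ)]

/-- The saddle points of `F` in `Ξ`: critical points which are neither local minima nor
local maxima. -/
def saddles (Ξ : Set (E d)) (F : E d → ℝ) : Set (E d) :=
  {z ∈ Ξ | fderiv ℝ F z = 0 ∧ ¬ IsLocalMin F z ∧ ¬ IsLocalMax F z}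

/-- The general setting: an open bounded domain `Ξ ⊂ ℝ^d` with smooth boundary, a twice
continuously differentiable potential `F` with finitely many critical points satisfying
hypotheses (H1)-(H4).  For a saddle point `z`, `-μs z` is the unique negative eigenvalue of
the Hessian of `F` at `z`, and `nvec` is the exterior normal field at the boundary. -/
structure PotentialSetting (d : ℕ) where
  Ξ : Set (E d)
  F : E d → ℝ
  μs : E d → ℝ
  nvec : E d → E d
  isOpen : IsOpen Ξ
  isBounded : Bornology.IsBounded Ξ
  smooth : ContDiffOn ℝ 2 F (closure Ξ)
  /-- (H1): the second derivatives of `F` are Lipschitz continuous. -/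
  hessLip : ∃ C : ℝ, ∀ i j : Fin d, ∀ x y : E d, |hess F x i j - hess F y i j| ≤ C * ‖x - y‖
  /-- `F` has finitely many critical points. -/
  finCrit : {z ∈ Ξ | fderiv ℝ F z = 0}.Finite
  /-- (H2): at local minima all eigenvalues of the Hessian are strictly positive. -/
  minHess : ∀ z ∈ Ξ, fderiv ℝ F z = 0 → IsLocalMin F z →
    ∀ t : ℝ, Module.End.HasEigenvalue (Matrix.toLin' (hess F z)) t → 0 < t
  /-- (H3): at saddle points the Hessian has the unique strictly negative eigenvalue
  `-μs z`, all other eigenvalues being strictly positive. -/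
  saddleHess : ∀ z ∈ saddles Ξ F,
    0 < μs z ∧ Module.End.HasEigenvalue (Matrix.toLin' (hess F z)) (-(μs z)) ∧
      ∀ t : ℝ, Module.End.HasEigenvalue (Matrix.toLin' (hess F z)) t → t = -(μs z) ∨ 0 < t
  nvec_unit : ∀ x ∈ frontier Ξ, ‖nvec x‖ = 1
  nvec_exterior : ∀ x ∈ frontier Ξ, ∀ᶠ t in 𝓝[>] (0:ℝ), x + t • nvec x ∉ closure Ξ
  /-- (H4): `∇F(x) ⋅ n(x) < 0` on the boundary of `Ξ`. -/
  grad_inward : ∀ x ∈ frontier Ξ, ⟪gradient F x, nvec x⟫ < (0:ℝ)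

/-- The setting of a fixed connected component `Ω = Ω^i_j` of `{F ≤ H_i}` (`H_i` being one of
the heights of the saddle points), decomposed into wells `W_1, …, W_ℓ`, together with the
parameter `ε ∈ (0, H_i - H_{i-1})` used to define the sets `ℰ^a_N`. -/
structure WellSetting (d : ℕ) extends PotentialSetting d where
  Hi : ℝ
  Ω : Set (E d)
  ℓ : ℕ
  W : Fin ℓ → Set (E d)
  ε : ℝ
  /-- `H_i` is the common height of the saddle points of level `i`. -/
  level_saddle : ∃ z ∈ saddles Ξ F, F z = Hi
  /-- `Ω` is a connected component of `{x ∈ Ξ : F(x) ≤ H_i}`. -/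
  comp : ∃ x₀ ∈ {x ∈ Ξ | F x ≤ Hi}, Ω = connectedComponentIn {x ∈ Ξ | F x ≤ Hi} x₀
  /-- `Ω` contains a saddle point of height `H_i`. -/
  comp_saddle : ∃ z ∈ saddles Ξ F, F z = Hi ∧ z ∈ Ω
  /-- each well is the closure of a connected component of the interior of `Ω`. -/
  well_comp : ∀ a, ∃ x ∈ interior Ω, W a = closure (connectedComponentIn (interior Ω) x)
  well_cover : (⋃ a, W a) = Ω
  well_inj : Function.Injective W
  εpos : 0 < ε
  /-- `ε < H_i - H_{i-1}`: all saddle points strictly below level `H_i` lie below `H_i - ε`. -/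
  εsmall : ∀ z ∈ saddles Ξ F, F z < Hi → F z < Hi - ε

namespace WellSetting

variable (S : WellSetting d)

/-- `W^ε_a = {x ∈ W_a : F(x) < H_i - ε}`. -/
def Wε (a : Fin S.ℓ) : Set (E d) := {x ∈ S.W a | S.F x < S.Hi - S.ε}

/-- `ℰ^a_N = W^ε_a ∩ Ξ_N`. -/
def well (N : ℕ) (a : Fin S.ℓ) : Set (E d) := S.Wε a ∩ disc S.Ξ N

/-- `ℰ_N(A) = ∪_{a ∈ A} ℰ^a_N`. -/
def wells (N : ℕ) (A : Finset (Fin S.ℓ)) : Set (E d) := ⋃ a ∈ A, S.well N a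

/-- `𝔖_{a,b}`, the saddle points separating `W_a` from `W_b`. -/
def sadBetween (a b : Fin S.ℓ) : Set (E d) := saddles S.Ξ S.F ∩ S.W a ∩ S.W b

/-- `𝔖(A)`, the saddle points separating `∪_{a∈A} W_a` from `∪_{a∉A} W_a`. -/
def sadSep (A : Finset (Fin S.ℓ)) : Set (E d) := ⋃ a ∈ A, ⋃ b ∈ Aᶜ, S.sadBetween a b

/-- The weight `ω(z) = μ(z)/√(-det Hess F(z))` of a saddle point `z`. -/
def ω (z : E d) : ℝ := S.μs z / Real.sqrt (-(hess S.F z).det)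

/-- The conductances `c(a,b) = Σ_{z ∈ 𝔖_{a,b}} μ(z)/√(-det Hess F(z))` of the graph `𝔾`. -/
def condG (a b : Fin S.ℓ) : ℝ := ∑' z : S.sadBetween a b, S.ω (z : E d)

end WellSetting

/-- The capacity (effective conductance) between `A` and `B` in the finite network on
`{1, …, ℓ}` with conductances `c`, defined through the Dirichlet variational principle. -/
def capNetwork (ℓ : ℕ) (c : Fin ℓ → Fin ℓ → ℝ) (A B : Finset (Fin ℓ)) : ℝ :=
  sInf {r : ℝ | ∃ f : Fin ℓ → ℝ, (∀ a ∈ A, f a = 1) ∧ (∀ b ∈ B, f b = 0) ∧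
    r = (1/2) * ∑ a : Fin ℓ, ∑ b : Fin ℓ, c a b * (f a - f b)^2}

namespace WellSetting

variable (S : WellSetting d)

/-- `Cap_𝔾(A,B)`: the capacity between `A` and `B` in the weighted graph `𝔾`. -/
def capG (A B : Finset (Fin S.ℓ)) : ℝ := capNetwork S.ℓ S.condG A B

/-- The local minima of `F` lying in the well `W_a`. -/
def minimaIn (a : Fin S.ℓ) : Set (E d) := {x ∈ S.W a ∩ S.Ξ | IsLocalMin S.F x}

/-- `h_a`, the minimal value of `F` on the local minima contained in `W_a`. -/
def hmin (a : Fin S.ℓ) : ℝ := sInf (S.F '' S.minimaIn a)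

/-- The deepest local minima `m_{a,1}, …, m_{a,q_a}` of the well `W_a`. -/
def deepMin (a : Fin S.ℓ) : Set (E d) := {x ∈ S.minimaIn a | S.F x = S.hmin a}

/-- `𝛍(a) = Σ_k (det Hess F(m_{a,k}))^{-1/2}`. -/
def μwell (a : Fin S.ℓ) : ℝ := ∑' x : S.deepMin a, 1 / Real.sqrt ((hess S.F (x : E d)).det)

/-- The depth `θ̂_a = H_i - h_a` of the well `W_a`. -/
def depth (a : Fin S.ℓ) : ℝ := S.Hi - S.hmin a

end WellSetting

/-- The outer (lattice) boundary of a set `B ⊂ Ξ_N`. -/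
def outerBoundary (Ξ : Set (E d)) (N : ℕ) (B : Set (E d)) : Set (E d) :=
  {x ∈ disc Ξ N | x ∉ B ∧ ∃ y ∈ B, ‖y - x‖ = 1 / N}

end RWPotential

namespace RWPotential

variable {d : ℕ}

/-- The approximate equilibrium potential profile
`f_N(r) = √(Nμ/2π) ∫_{-∞}^r e^{-(1/2)Nμ s²} ds` (here `c = Nμ`). -/
def fGauss (c : ℝ) (r : ℝ) : ℝ :=
  Real.sqrt (c / (2 * π)) * ∫ s in Set.Iio r, Real.exp (-(c / 2) * s ^ 2)

/-- The Dirichlet form of `f` restricted to the edges in `B`: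
`D_N(f; B) = Σ_{i=1}^d Σ_{x ∈ B} μ_N(x) R_N(x, x + e_i) [f(x + e_i) - f(x)]²`. -/
def dirichletRestricted (Ξ : Set (E d)) (F : E d → ℝ) (N : ℕ) (f : E d → ℝ)
    (B : Set (E d)) : ℝ :=
  ∑ i : Fin d, ∑' x : B, gibbs Ξ F N (x : E d) *
    rate Ξ F N (x : E d) ((x : E d) + (N : ℝ)⁻¹ • EuclideanSpace.single i (1:ℝ)) *
    (f ((x : E d) + (N : ℝ)⁻¹ • EuclideanSpace.single i (1:ℝ)) - f (x : E d)) ^ 2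

/-! ### Lattice sums as integrals -/

/-- The coordinatewise integer part pushes Lebesgue measure forward to the counting measure. -/
lemma map_floor_volume (d : ℕ) :
    Measure.map (fun (y : E d) (i : Fin d) => ⌊y i⌋) volume = Measure.count := by
  have hmeas : Measurable fun (y : E d) (i : Fin d) => ⌊y i⌋ := by fun_prop
  refine Measure.ext_of_singleton fun k => ?_
  rw [Measure.map_apply hmeas (measurableSet_singleton k), Measure.count_singleton]
  have hset : (fun (y : E d) (i : Fin d) => ⌊y i⌋) ⁻¹' {k} =
      WithLp.ofLp ⁻¹' (Set.univ.pi fun i => Set.Ico (k i : ℝ) (k i + 1)) := by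
    ext y
    simp [funext_iff, Int.floor_eq_iff]
  rw [hset, (PiLp.volume_preserving_ofLp (Fin d)).measure_preimage
    (MeasurableSet.univ_pi fun i => measurableSet_Ico).nullMeasurableSet, Real.volume_pi_Ico]
  simp

lemma integral_comp_floor (G : (Fin d → ℤ) → ℝ) :
    ∫ y : E d, G (fun i => ⌊y i⌋) = ∑' k, G k := by
  have hmeas : Measurable fun (y : E d) (i : Fin d) => ⌊y i⌋ := by fun_prop
  rw [← integral_map (φ := fun (y : E d) (i : Fin d) => ⌊y i⌋) hmeas.aemeasurable
    (measurable_of_countable G).aestronglyMeasurable, map_floor_volume]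
  by_cases hG : Integrable G Measure.count
  · rw [integral_countable hG]
    simp [Measure.real]
  · rw [integral_undef hG, tsum_eq_zero_of_not_summable]
    rwa [integrable_count_iff, summable_norm_iff] at hG

lemma integral_comp_floor_smul_add (G : (Fin d → ℤ) → ℝ) {R : ℝ} (hR : 0 < R) (a : E d) :
    ∫ u : E d, G (fun i => ⌊R * u i + a i⌋) = (R ^ d)⁻¹ * ∑' k, G k := by
  have h := Measure.integral_comp_smul (volume : Measure (E d))
    (fun y : E d => G (fun i => ⌊(y + a) i⌋)) R
  rw [integral_add_right_eq_self (fun y : E d => G (fun i => ⌊y i⌋)), integral_comp_floor] at h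
  simpa [abs_of_pos (pow_pos hR d)] using h

/-- The point `k / N` of the rescaled lattice. -/
def latticePoint (N : ℕ) (k : Fin d → ℤ) : E d := WithLp.toLp 2 fun i => (k i : ℝ) / N

lemma isLatticePoint_latticePoint (N : ℕ) (k : Fin d → ℤ) :
    IsLatticePoint N (latticePoint N k) := fun i => ⟨k i, rfl⟩

lemma latticePoint_injective {N : ℕ} (hN : 0 < N) :
    Function.Injective (latticePoint N : (Fin d → ℤ) → E d) := by
  intro k l h
  funext i
  have hi := congrArg (fun x : E d => x i) h
  have hN' : (N : ℝ) ≠ 0 := by positivity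
  simpa [latticePoint, div_left_inj' hN'] using hi

lemma tsum_disc_eq_tsum_latticePoint (Ξ : Set (E d)) {N : ℕ} (hN : 0 < N) (p : E d → Prop)
    (h : E d → ℝ) :
    ∑' x : {x ∈ disc Ξ N | p x}, h x =
      ∑' k : Fin d → ℤ, {x | x ∈ Ξ ∧ p x}.indicator h (latticePoint N k) := by
  have hsupp : Function.support ({x ∈ disc Ξ N | p x}.indicator h) ⊆
      Set.range (latticePoint N : (Fin d → ℤ) → E d) := by
    intro x hx
    obtain ⟨⟨⟨-, hx⟩, -⟩, -⟩ := Set.indicator_apply_ne_zero.1 hx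
    choose k hk using hx
    exact ⟨k, by ext i; exact (hk i).symm⟩
  rw [tsum_subtype, ← (latticePoint_injective hN).tsum_eq hsupp]
  refine tsum_congr fun k => ?_
  have := isLatticePoint_latticePoint N k
  by_cases hk : latticePoint N k ∈ Ξ ∧ p (latticePoint N k)
  · rw [Set.indicator_of_mem, Set.indicator_of_mem]
    exacts [hk, ⟨⟨hk.1, this⟩, hk.2⟩]
  · rw [Set.indicator_of_notMem, Set.indicator_of_notMem]
    exacts [hk, fun h' => hk ⟨h'.1.1, h'.2⟩]

lemma integrable_exp_neg_mul_sq_norm {c : ℝ} (hc : 0 < c) :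
    Integrable fun u : E d => Real.exp (-c * ‖u‖ ^ 2) := by
  by_contra h
  have h' := GaussianFourier.integral_rexp_neg_mul_sq_norm (V := E d) hc
  rw [integral_undef h] at h'
  have : 0 < (π / c) ^ ((Module.finrank ℝ (E d) : ℝ) / 2) := by positivity
  exact this.ne h'

/-- The rescaled displacement from `z` of the lattice point below `z + u / √N`. -/
def scaledFloor (z : E d) (N : ℕ) (u : E d) : E d :=
  √N • (latticePoint N (fun i => ⌊√N * u i + N * z i⌋) - z)

lemma add_inv_sqrt_smul_scaledFloor (z : E d) {N : ℕ} (hN : 0 < N) (u : E d) :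
    z + (√N)⁻¹ • scaledFloor z N u = latticePoint N (fun i => ⌊√N * u i + N * z i⌋) := by
  have : √(N : ℝ) ≠ 0 := by positivity
  rw [scaledFloor, inv_smul_smul₀ this, add_sub_cancel]

lemma norm_scaledFloor_sub_le (z : E d) {N : ℕ} (hN : 0 < N) (u : E d) :
    ‖scaledFloor z N u - u‖ ≤ √d / √N := by
  have hs : 0 < √(N : ℝ) := by positivity
  have hsq : √(N : ℝ) * √N = N := Real.mul_self_sqrt (by positivity)
  rw [EuclideanSpace.norm_eq, ← Real.sqrt_div (by positivity)]
  refine Real.sqrt_le_sqrt ?_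
  calc ∑ i, ‖(scaledFloor z N u - u) i‖ ^ 2 ≤ ∑ _i : Fin d, 1 / (N : ℝ) := by
        refine Finset.sum_le_sum fun i _ => ?_
        have heq : (scaledFloor z N u - u) i =
            (⌊√N * u i + N * z i⌋ - (√N * u i + N * z i)) / √N := by
          simp only [scaledFloor, latticePoint, PiLp.sub_apply, PiLp.smul_apply, smul_eq_mul]
          rw [eq_div_iff hs.ne']
          generalize ((⌊√N * u i + N * z i⌋ : ℤ) : ℝ) = m
          have hm : (N : ℝ) * (m / N) = m := mul_div_cancel₀ m (by positivity)
          linear_combination (m / N - z i) * hsq + hm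
        have hf := Int.floor_le (√N * u i + N * z i)
        have hf' := Int.lt_floor_add_one (√N * u i + N * z i)
        rw [heq, Real.norm_eq_abs, sq_abs, div_pow, Real.sq_sqrt (by positivity)]
        gcongr
        nlinarith
    _ = d / N := by simp [div_eq_mul_inv]

/-- A dominated convergence principle for lattice sums at scale `√N` around `z`. -/
lemma tendsto_tsum_latticePoint (z : E d) (g : ℕ → E d → ℝ) (h : E d → ℝ) {C c : ℝ} (hc : 0 < c)
    (hdom : ∀ᶠ N : ℕ in atTop, ∀ p : E d,
      |g N (z + (√N)⁻¹ • p)| ≤ C * Real.exp (-c * ‖p‖ ^ 2))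
    (hlim : ∀ (p : ℕ → E d) (u : E d), Tendsto p atTop (𝓝 u) →
      Tendsto (fun N : ℕ => g N (z + (√N)⁻¹ • p N)) atTop (𝓝 (h u))) :
    Tendsto (fun N : ℕ => (√N ^ d)⁻¹ * ∑' k : Fin d → ℤ, g N (latticePoint N k)) atTop
      (𝓝 (∫ u, h u)) := by
  have hfloor : ∀ (N : ℕ) (u : E d), 0 < N → g N (z + (√N)⁻¹ • scaledFloor z N u) =
      g N (latticePoint N (fun i => ⌊√N * u i + N * z i⌋)) := fun N u hN => by
    rw [add_inv_sqrt_smul_scaledFloor z hN]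
  have hint : ∀ᶠ N : ℕ in atTop, ∫ u, g N (z + (√N)⁻¹ • scaledFloor z N u) =
      (√N ^ d)⁻¹ * ∑' k : Fin d → ℤ, g N (latticePoint N k) := by
    filter_upwards [eventually_gt_atTop 0] with N hN
    simp_rw [fun u => hfloor N u hN]
    exact integral_comp_floor_smul_add (fun k => g N (latticePoint N k))
      (R := √N) (by positivity) ((N : ℝ) • z)
  refine Tendsto.congr' hint ?_
  refine tendsto_integral_filter_of_dominated_convergence
    (fun u => |C| * Real.exp (c * d) * Real.exp (-(c / 2) * ‖u‖ ^ 2)) ?_ ?_ ?_ ?_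
  · filter_upwards [eventually_gt_atTop 0] with N hN
    simp_rw [fun u => hfloor N u hN]
    refine Measurable.aestronglyMeasurable ?_
    have hm : Measurable fun (u : E d) (i : Fin d) => ⌊√N * u i + N * z i⌋ := by fun_prop
    exact (measurable_of_countable fun k : Fin d → ℤ => g N (latticePoint N k)).comp hm
  · filter_upwards [hdom, eventually_gt_atTop 0] with N hN hN0
    refine Eventually.of_forall fun u => (hN _).trans ?_
    rw [mul_assoc, ← Real.exp_add]
    refine mul_le_mul (le_abs_self C) (Real.exp_le_exp.2 ?_) (Real.exp_pos _).le (abs_nonneg C)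
    have h1 := norm_scaledFloor_sub_le z hN0 u
    have h2 : √(d : ℝ) / √N ≤ √d := div_le_self (by positivity)
      (Real.one_le_sqrt.2 (by exact_mod_cast hN0))
    have h3 : ‖u‖ ≤ ‖scaledFloor z N u‖ + √d := by
      have := norm_sub_norm_le u (scaledFloor z N u)
      rw [norm_sub_rev] at this
      linarith
    have h4 : ‖u‖ ^ 2 ≤ 2 * ‖scaledFloor z N u‖ ^ 2 + 2 * d := by
      have h5 : √(d : ℝ) ^ 2 = d := Real.sq_sqrt (by positivity)
      nlinarith [norm_nonneg u, sq_nonneg (‖scaledFloor z N u‖ - √d),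
        pow_le_pow_left₀ (norm_nonneg u) h3 2]
    nlinarith
  · exact (integrable_exp_neg_mul_sq_norm (by positivity)).const_mul _
  · refine Eventually.of_forall fun u => hlim _ u ?_
    rw [tendsto_iff_norm_sub_tendsto_zero]
    refine squeeze_zero' (Eventually.of_forall fun N => norm_nonneg _)
      ((eventually_gt_atTop 0).mono fun N hN => norm_scaledFloor_sub_le z hN u) ?_
    exact tendsto_const_nhds.div_atTop (Real.tendsto_sqrt_atTop.comp tendsto_natCast_atTop_atTop)

/-! ### Second order expansion at a critical point -/

/-- Second order Taylor expansion, with Peano remainder, at a critical point. -/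
lemma exists_taylor_two_of_fderiv_eq_zero {V : Type*} [NormedAddCommGroup V] [NormedSpace ℝ V]
    {F : V → ℝ} {z : V} (hF : ContDiffAt ℝ 2 F z) (hz : fderiv ℝ F z = 0) {δ : ℝ} (hδ : 0 < δ) :
    ∃ r > 0, ∀ q : V, ‖q‖ < r →
      |F (z + q) - F z - 1 / 2 * fderiv ℝ (fderiv ℝ F) z q q| ≤ δ * ‖q‖ ^ 2 := by
  set D := fderiv ℝ (fderiv ℝ F) z with hD
  have hsymm : ∀ a b, D a b = D b a := hF.isSymmSndFDerivAt (by simp)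
  have hdiff : DifferentiableAt ℝ (fderiv ℝ F) z :=
    (hF.fderiv_right (m := 1) (by norm_num)).differentiableAt (by norm_num)
  have hlo := hdiff.hasFDerivAt.isLittleO.def hδ
  have hev : ∀ᶠ x in 𝓝 z, DifferentiableAt ℝ F x :=
    (hF.eventually (by simp)).mono fun x hx => hx.differentiableAt (by norm_num)
  obtain ⟨r, hr, hball⟩ := Metric.eventually_nhds_iff.1 (hlo.and hev)
  refine ⟨r, hr, fun q hq => ?_⟩
  have hderiv : ∀ p ∈ Metric.closedBall (0 : V) ‖q‖,
      HasFDerivWithinAt (fun p => F (z + p) - 1 / 2 * D p p) (fderiv ℝ F (z + p) - D p)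
        (Metric.closedBall (0 : V) ‖q‖) p := by
    intro p hp
    have hp' : dist (z + p) z < r := by
      simpa [dist_eq_norm] using (mem_closedBall_zero_iff.1 hp).trans_lt hq
    have h1 : HasFDerivAt (fun p => F (z + p)) (fderiv ℝ F (z + p)) p := by
      have h := (hball hp').2.hasFDerivAt.comp p ((hasFDerivAt_id p).const_add z)
      simpa [Function.comp_def] using h
    have h2 : HasFDerivAt (fun p => D p p) (D p + D.flip p) p := by
      refine (D.hasFDerivAt.clm_apply (hasFDerivAt_id p)).congr_fderiv ?_
      ext v
      simp [ContinuousLinearMap.flip_apply]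
    refine (h1.sub (h2.const_mul (1 / 2))).hasFDerivWithinAt.congr_fderiv ?_
    ext v
    simp [hsymm v p]
    ring
  have hbound : ∀ p ∈ Metric.closedBall (0 : V) ‖q‖, ‖fderiv ℝ F (z + p) - D p‖ ≤ δ * ‖q‖ := by
    intro p hp
    have hp0 := mem_closedBall_zero_iff.1 hp
    have hp' : dist (z + p) z < r := by simpa [dist_eq_norm] using hp0.trans_lt hq
    have h := (hball hp').1
    simp only [hz, sub_zero, add_sub_cancel_left] at h
    exact h.trans (by gcongr)
  have h := Convex.norm_image_sub_le_of_norm_hasFDerivWithin_le hderiv hbound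
    (convex_closedBall _ _) (x := 0) (y := q) (by simp) (by simp)
  simp only [add_zero, map_zero, mul_zero, sub_zero, Real.norm_eq_abs] at h
  calc |F (z + q) - F z - 1 / 2 * D q q| = |F (z + q) - 1 / 2 * D q q - F z| := by ring_nf
    _ ≤ δ * ‖q‖ * ‖q‖ := h
    _ = δ * ‖q‖ ^ 2 := by ring

/-- Second order expansion at a critical point, at scale `√N`. -/
lemma exists_abs_mul_sub_sub_le_of_fderiv_eq_zero {V : Type*} [NormedAddCommGroup V] [NormedSpace ℝ V]
    {F : V → ℝ} {z : V} (hF : ContDiffAt ℝ 2 F z) (hz : fderiv ℝ F z = 0) {δ : ℝ} (hδ : 0 < δ) :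
    ∃ r > 0, ∀ N : ℕ, 0 < N → ∀ p : V, ‖(√N)⁻¹ • p‖ < r →
      |N * (F (z + (√N)⁻¹ • p) - F z) - 1 / 2 * fderiv ℝ (fderiv ℝ F) z p p| ≤
        δ * ‖p‖ ^ 2 := by
  obtain ⟨r, hr, h⟩ := exists_taylor_two_of_fderiv_eq_zero hF hz hδ
  refine ⟨r, hr, fun N hN p hp => ?_⟩
  have h' := h _ hp
  have hN' : (0 : ℝ) < N := by exact_mod_cast hN
  have hsq : (√(N : ℝ))⁻¹ ^ 2 = (N : ℝ)⁻¹ := by rw [inv_pow, Real.sq_sqrt hN'.le]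
  rw [norm_smul, Real.norm_eq_abs, mul_pow, sq_abs, hsq] at h'
  simp only [map_smul, _root_.smul_apply, smul_eq_mul] at h'
  rw [← mul_assoc (√(N : ℝ))⁻¹, ← pow_two, hsq] at h'
  have h2 := mul_le_mul_of_nonneg_left h' hN'.le
  rw [← abs_of_pos hN', ← abs_mul, abs_of_pos hN'] at h2
  have e1 : ∀ t : ℝ, N * (1 / 2 * ((N : ℝ)⁻¹ * t)) = 1 / 2 * t := fun t => by field_simp
  have e2 : ∀ t : ℝ, N * (δ * ((N : ℝ)⁻¹ * t)) = δ * t := fun t => by field_simp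
  rwa [mul_sub, e1, e2] at h2

lemma tendsto_inv_sqrt_natCast : Tendsto (fun N : ℕ => (√(N : ℝ))⁻¹) atTop (𝓝 0) :=
  (Real.tendsto_sqrt_atTop.comp tendsto_natCast_atTop_atTop).inv_tendsto_atTop

lemma tendsto_mul_sub_of_fderiv_eq_zero {V : Type*} [NormedAddCommGroup V] [NormedSpace ℝ V]
    {F : V → ℝ} {z : V} (hF : ContDiffAt ℝ 2 F z) (hz : fderiv ℝ F z = 0) {p : ℕ → V} {u : V}
    (hp : Tendsto p atTop (𝓝 u)) :
    Tendsto (fun N : ℕ => N * (F (z + (√N)⁻¹ • p N) - F z)) atTop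
      (𝓝 (1 / 2 * fderiv ℝ (fderiv ℝ F) z u u)) := by
  have hQ : Tendsto (fun N => 1 / 2 * fderiv ℝ (fderiv ℝ F) z (p N) (p N)) atTop
      (𝓝 (1 / 2 * fderiv ℝ (fderiv ℝ F) z u u)) := by
    have hc : Continuous fun q : V => 1 / 2 * fderiv ℝ (fderiv ℝ F) z q q := by fun_prop
    exact (hc.tendsto u).comp hp
  have hsmall : Tendsto (fun N : ℕ => ‖(√N)⁻¹ • p N‖) atTop (𝓝 0) := by
    simpa using (tendsto_inv_sqrt_natCast.smul hp).norm
  have hdiff : Tendsto (fun N : ℕ => N * (F (z + (√N)⁻¹ • p N) - F z) -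
      1 / 2 * fderiv ℝ (fderiv ℝ F) z (p N) (p N)) atTop (𝓝 0) := by
    rw [Metric.tendsto_nhds]
    intro ε hε
    obtain ⟨r, hr, h⟩ := exists_abs_mul_sub_sub_le_of_fderiv_eq_zero hF hz
      (δ := ε / (‖u‖ ^ 2 + 1)) (by positivity)
    have hnorm : ∀ᶠ N in atTop, ‖p N‖ ^ 2 < ‖u‖ ^ 2 + 1 :=
      (hp.norm.pow 2).eventually_lt_const (by linarith)
    filter_upwards [hsmall.eventually_lt_const hr, eventually_gt_atTop 0, hnorm] with N h1 h2 h3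
    rw [dist_zero_right, Real.norm_eq_abs]
    refine (h N h2 _ h1).trans_lt ?_
    rw [div_mul_eq_mul_div, div_lt_iff₀ (by positivity)]
    gcongr
  simpa using hdiff.add hQ

/-! ### The Gaussian profile and Gaussian integrals -/

lemma hasDerivAt_fGauss {c : ℝ} (hc : 0 < c) (r : ℝ) :
    HasDerivAt (fGauss c) (√(c / (2 * π)) * Real.exp (-(c / 2) * r ^ 2)) r := by
  have hint : Integrable fun s : ℝ => Real.exp (-(c / 2) * s ^ 2) :=
    integrable_exp_neg_mul_sq (by positivity)
  have hcont : Continuous fun s : ℝ => Real.exp (-(c / 2) * s ^ 2) := by fun_prop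
  have heq : fGauss c = fun r => √(c / (2 * π)) *
      ((∫ s in Set.Iic 0, Real.exp (-(c / 2) * s ^ 2)) +
        ∫ s in (0 : ℝ)..r, Real.exp (-(c / 2) * s ^ 2)) := by
    funext r
    rw [fGauss, ← integral_Iic_eq_integral_Iio,
      ← intervalIntegral.integral_Iic_sub_Iic hint.integrableOn hint.integrableOn]
    ring
  rw [heq]
  exact ((intervalIntegral.integral_hasDerivAt_right (hcont.intervalIntegrable _ _)
    (hcont.stronglyMeasurableAtFilter _ _) hcont.continuousAt).const_add _).const_mul _

lemma exists_fGauss_sub_eq {c : ℝ} (hc : 0 < c) (r h : ℝ) :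
    ∃ s, |s - r| ≤ |h| ∧ |s - (r + h)| ≤ |h| ∧
      fGauss c (r + h) - fGauss c r = √(c / (2 * π)) * Real.exp (-(c / 2) * s ^ 2) * h := by
  have hmvt : ∀ a b, a < b → ∃ s ∈ Set.Ioo a b, fGauss c b - fGauss c a =
      √(c / (2 * π)) * Real.exp (-(c / 2) * s ^ 2) * (b - a) := by
    intro a b hab
    obtain ⟨s, hs, h⟩ := exists_hasDerivAt_eq_slope (fGauss c) _ hab
      (fun x _ => (hasDerivAt_fGauss hc x).continuousAt.continuousWithinAt)
      (fun x _ => hasDerivAt_fGauss hc x)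
    refine ⟨s, hs, ?_⟩
    rw [h, div_mul_cancel₀ _ (sub_pos.2 hab).ne']
  rcases lt_trichotomy h 0 with hh | rfl | hh
  · obtain ⟨s, hs, h'⟩ := hmvt (r + h) r (by linarith)
    refine ⟨s, ?_, ?_, by linear_combination -h'⟩ <;> rw [abs_of_neg hh, abs_le] <;>
      constructor <;> linarith [hs.1, hs.2]
  · exact ⟨r, by simp⟩
  · obtain ⟨s, hs, h'⟩ := hmvt r (r + h) (by linarith)
    refine ⟨s, ?_, ?_, by linear_combination h'⟩ <;> rw [abs_of_pos hh, abs_le] <;>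
      constructor <;> linarith [hs.1, hs.2]

lemma integral_exp_neg_sum_sq (b : OrthonormalBasis (Fin d) ℝ (E d)) (α : Fin d → ℝ) :
    ∫ u : E d, Real.exp (-(1 / 2) * ∑ j, α j * b.repr u j ^ 2) = ∏ j, √(2 * π / α j) := by
  rw [b.measurePreserving_repr.integral_comp b.repr.toHomeomorph.measurableEmbedding
    (fun y : E d => Real.exp (-(1 / 2) * ∑ j, α j * y j ^ 2)),
    (PiLp.volume_preserving_ofLp (Fin d)).integral_comp
      (MeasurableEquiv.toLp 2 (Fin d → ℝ)).symm.measurableEmbedding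
      (fun y : Fin d → ℝ => Real.exp (-(1 / 2) * ∑ j, α j * y j ^ 2))]
  have : ∀ y : Fin d → ℝ, Real.exp (-(1 / 2) * ∑ j, α j * y j ^ 2) =
      ∏ j, Real.exp (-(α j / 2) * y j ^ 2) := fun y => by
    rw [← Real.exp_sum, Finset.mul_sum]
    congr 1
    exact Finset.sum_congr rfl fun j _ => by ring
  simp_rw [this]
  rw [integral_fintype_prod_volume_eq_prod fun j (t : ℝ) => Real.exp (-(α j / 2) * t ^ 2)]
  refine Finset.prod_congr rfl fun j _ => ?_
  rw [integral_gaussian]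
  congr 1
  field_simp

/-! ### Spectral decomposition of the Hessian -/

lemma exists_orthonormalBasis_repr {w : Fin d → E d}
    (hw : ∀ j k : Fin d, (∑ i : Fin d, w j i * w k i) = if j = k then 1 else 0) :
    ∃ b : OrthonormalBasis (Fin d) ℝ (E d), ∀ (p : E d) (j : Fin d),
      b.repr p j = ∑ i, p i * w j i := by
  have hon : Orthonormal ℝ w := by
    rw [orthonormal_iff_ite]
    intro j k
    rw [← hw j k, PiLp.inner_apply]
    exact Finset.sum_congr rfl fun i _ => by simp [mul_comm]
  refine ⟨OrthonormalBasis.mk hon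
    (hon.linearIndependent.span_eq_top_of_card_eq_finrank' (by simp)).ge, fun p j => ?_⟩
  rw [OrthonormalBasis.repr_apply_apply, OrthonormalBasis.coe_mk, PiLp.inner_apply]
  exact Finset.sum_congr rfl fun i _ => by simp

lemma norm_sq_eq_sum_repr_sq (b : OrthonormalBasis (Fin d) ℝ (E d)) (p : E d) :
    ‖p‖ ^ 2 = ∑ j, b.repr p j ^ 2 := by
  rw [← b.repr.norm_map p, EuclideanSpace.norm_sq_eq]
  simp

lemma eq_sum_repr_mul {w : Fin d → E d} {b : OrthonormalBasis (Fin d) ℝ (E d)}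
    (hb : ∀ (p : E d) (j : Fin d), b.repr p j = ∑ i, p i * w j i) (p : E d) (i : Fin d) :
    p i = ∑ j, b.repr p j * w j i := by
  have hbw : ∀ j, b j i = w j i := fun j => by
    have h := hb (EuclideanSpace.single i 1) j
    simpa [OrthonormalBasis.repr_apply_apply, EuclideanSpace.inner_single_right] using h
  have h := congrArg (fun x : E d => x i) (b.sum_repr p)
  simpa [hbw] using h.symm

lemma fderiv_fderiv_apply_eq_sum (F : E d → ℝ) (z p : E d) :
    fderiv ℝ (fderiv ℝ F) z p p = ∑ i, p i * ∑ k, hess F z i k * p k := by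
  have hp : p = ∑ i, p i • EuclideanSpace.single i (1 : ℝ) := by
    ext j
    simp [Pi.single_apply]
  conv_lhs => rw [hp]
  simp only [map_sum, map_smul, _root_.sum_apply, _root_.smul_apply,
    smul_eq_mul, hess, iteratedFDeriv_two_apply, Matrix.cons_val_zero, Matrix.cons_val_one,
    Finset.mul_sum]
  rw [Finset.sum_comm]
  exact Finset.sum_congr rfl fun i _ => Finset.sum_congr rfl fun k _ => by ring

lemma fderiv_fderiv_apply_eq_sum_eigenvalue {F : E d → ℝ} {z : E d} {w : Fin d → E d}
    {l : Fin d → ℝ} (hw : ∀ j i : Fin d, (∑ k : Fin d, hess F z i k * w j k) = l j * w j i)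
    {b : OrthonormalBasis (Fin d) ℝ (E d)}
    (hb : ∀ (p : E d) (j : Fin d), b.repr p j = ∑ i, p i * w j i) (p : E d) :
    fderiv ℝ (fderiv ℝ F) z p p = ∑ j, l j * b.repr p j ^ 2 := by
  have h : ∀ i, ∑ k, hess F z i k * p k = ∑ j, l j * b.repr p j * w j i := by
    intro i
    calc ∑ k, hess F z i k * p k = ∑ k, ∑ j, b.repr p j * (hess F z i k * w j k) := by
          refine Finset.sum_congr rfl fun k _ => ?_
          rw [eq_sum_repr_mul hb p k, Finset.mul_sum]
          refine Finset.sum_congr rfl fun j _ => ?_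
          ring
      _ = ∑ j, b.repr p j * ∑ k, hess F z i k * w j k := by
          rw [Finset.sum_comm]
          simp_rw [Finset.mul_sum]
      _ = ∑ j, l j * b.repr p j * w j i :=
          Finset.sum_congr rfl fun j _ => by rw [hw]; ring
  rw [fderiv_fderiv_apply_eq_sum]
  simp_rw [h, Finset.mul_sum]
  rw [Finset.sum_comm]
  refine Finset.sum_congr rfl fun j _ => ?_
  calc ∑ i, p i * (l j * b.repr p j * w j i) = l j * b.repr p j * ∑ i, p i * w j i := by
        rw [Finset.mul_sum]
        exact Finset.sum_congr rfl fun i _ => by ring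
    _ = l j * b.repr p j ^ 2 := by rw [← hb]; ring

lemma det_eq_prod_of_orthonormal_eigenvectors {M : Matrix (Fin d) (Fin d) ℝ} {w : Fin d → E d}
    {l : Fin d → ℝ} (hw : ∀ j i : Fin d, (∑ k : Fin d, M i k * w j k) = l j * w j i)
    (hon : ∀ j k : Fin d, (∑ i : Fin d, w j i * w k i) = if j = k then 1 else 0) :
    M.det = ∏ j, l j := by
  set W : Matrix (Fin d) (Fin d) ℝ := Matrix.of fun i j => w j i with hW
  have h1 : M * W = W * Matrix.diagonal l := by
    ext i j
    rw [Matrix.mul_apply, Matrix.mul_diagonal]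
    simp only [hW, Matrix.of_apply]
    rw [hw]
    ring
  have h2 : W.transpose * W = 1 := by
    ext j k
    rw [Matrix.mul_apply, Matrix.one_apply]
    exact hon j k
  have h3 := congrArg Matrix.det h2
  rw [Matrix.det_mul, Matrix.det_one] at h3
  have h4 := congrArg Matrix.det h1
  rw [Matrix.det_mul, Matrix.det_mul, Matrix.det_diagonal, mul_comm] at h4
  exact mul_left_cancel₀ (right_ne_zero_of_mul_eq_one h3) h4

section Saddle

variable [NeZero d]

lemma sum_mul_sq_add_eq_sum_abs {μ : ℝ} {l : Fin d → ℝ} (hμ : 0 < μ) (h0 : l 0 = -μ)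
    (hpos : ∀ j, j ≠ 0 → 0 < l j) (a : Fin d → ℝ) :
    (∑ j, l j * a j ^ 2) + 2 * μ * a 0 ^ 2 = ∑ j, |l j| * a j ^ 2 := by
  rw [← Finset.add_sum_erase _ _ (Finset.mem_univ 0),
    ← Finset.add_sum_erase _ (fun j => |l j| * a j ^ 2) (Finset.mem_univ 0)]
  have : ∑ j ∈ Finset.univ.erase 0, |l j| * a j ^ 2 = ∑ j ∈ Finset.univ.erase 0, l j * a j ^ 2 :=
    Finset.sum_congr rfl fun j hj => by rw [abs_of_pos (hpos j (Finset.ne_of_mem_erase hj))]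
  rw [this, h0, abs_neg, abs_of_pos hμ]
  ring

lemma neg_prod_eq_prod_abs {μ : ℝ} {l : Fin d → ℝ} (hμ : 0 < μ) (h0 : l 0 = -μ)
    (hpos : ∀ j, j ≠ 0 → 0 < l j) : -∏ j, l j = ∏ j, |l j| := by
  rw [← Finset.mul_prod_erase _ _ (Finset.mem_univ 0),
    ← Finset.mul_prod_erase _ (fun j => |l j|) (Finset.mem_univ 0)]
  have : ∏ j ∈ Finset.univ.erase 0, |l j| = ∏ j ∈ Finset.univ.erase 0, l j :=
    Finset.prod_congr rfl fun j hj => abs_of_pos (hpos j (Finset.ne_of_mem_erase hj))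
  rw [this, h0, abs_neg, abs_of_pos hμ]
  ring

lemma exists_coercive {μ : ℝ} {l : Fin d → ℝ} (hμ : 0 < μ) (h0 : l 0 = -μ)
    (hpos : ∀ j, j ≠ 0 → 0 < l j) (b : OrthonormalBasis (Fin d) ℝ (E d)) :
    ∃ c > 0, ∀ (p : E d) (ξ : ℝ), |ξ - b.repr p 0| ≤ 1 →
      c * ‖p‖ ^ 2 - 3 * μ ≤ 1 / 2 * (∑ j, l j * b.repr p j ^ 2) + μ * ξ ^ 2 := by
  obtain ⟨m, hm⟩ := Finite.exists_min fun j => |l j|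
  have hm0 : 0 < |l m| := by
    rw [abs_pos]
    rcases eq_or_ne m 0 with rfl | h
    · rw [h0]; exact (neg_neg_of_pos hμ).ne
    · exact (hpos m h).ne'
  refine ⟨|l m| / 4, by positivity, fun p ξ hξ => ?_⟩
  have hsum := sum_mul_sq_add_eq_sum_abs hμ h0 hpos (b.repr p)
  have hle : |l m| * ‖p‖ ^ 2 ≤ ∑ j, |l j| * b.repr p j ^ 2 := by
    rw [norm_sq_eq_sum_repr_sq b, Finset.mul_sum]
    exact Finset.sum_le_sum fun j _ => mul_le_mul_of_nonneg_right (hm j) (sq_nonneg _)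
  have hle0 : μ * b.repr p 0 ^ 2 ≤ ∑ j, |l j| * b.repr p j ^ 2 := by
    have h := Finset.single_le_sum (f := fun j => |l j| * b.repr p j ^ 2)
      (fun j _ => by positivity) (Finset.mem_univ (0 : Fin d))
    simpa [h0, abs_of_pos hμ] using h
  have hξ2 : 3 / 4 * b.repr p 0 ^ 2 ≤ ξ ^ 2 + 3 := by
    have h1 : (ξ - b.repr p 0) ^ 2 ≤ 1 := by rw [sq_le_one_iff_abs_le_one]; exact hξ
    nlinarith [sq_nonneg (4 * ξ - 3 * b.repr p 0)]
  have hξ3 := mul_le_mul_of_nonneg_left hξ2 hμ.le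
  linarith

end Saddle

lemma exists_mul_fGauss_sub_sq_eq {μ : ℝ} (hμ : 0 < μ) {N : ℕ} (hN : 0 < N) (a v : ℝ) :
    ∃ ξ, |ξ - a| ≤ |v| / √N ∧ |ξ - (a + (√N)⁻¹ * v)| ≤ |v| / √N ∧
      N * (fGauss (N * μ) ((√N)⁻¹ * a + (N : ℝ)⁻¹ * v) - fGauss (N * μ) ((√N)⁻¹ * a)) ^ 2 =
        μ / (2 * π) * v ^ 2 * Real.exp (-(μ * ξ ^ 2)) := by
  have hN' : (0 : ℝ) < N := by exact_mod_cast hN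
  have hs : 0 < √(N : ℝ) := by positivity
  have hsq : √(N : ℝ) * √N = N := Real.mul_self_sqrt hN'.le
  obtain ⟨s, h1, h2, h3⟩ := exists_fGauss_sub_eq (mul_pos hN' hμ) ((√N)⁻¹ * a) ((N : ℝ)⁻¹ * v)
  have hscale : ∀ t, |s - t| ≤ |(N : ℝ)⁻¹ * v| → |√N * s - √N * t| ≤ |v| / √N := by
    intro t ht
    rw [← mul_sub, abs_mul, abs_of_pos hs]
    refine (mul_le_mul_of_nonneg_left ht hs.le).trans_eq ?_
    rw [abs_mul, abs_of_pos (inv_pos.2 hN'), eq_div_iff hs.ne']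
    linear_combination (N : ℝ)⁻¹ * |v| * hsq + |v| * inv_mul_cancel₀ hN'.ne'
  refine ⟨√N * s, ?_, ?_, ?_⟩
  · have h := hscale _ h1
    rwa [mul_inv_cancel_left₀ hs.ne'] at h
  · have h := hscale _ h2
    have heq : √(N : ℝ) * ((√N)⁻¹ * a + (N : ℝ)⁻¹ * v) = a + (√N)⁻¹ * v := by
      have h' : √(N : ℝ) * (N : ℝ)⁻¹ = (√N)⁻¹ := Real.sqrt_div_self
      rw [mul_add, mul_inv_cancel_left₀ hs.ne', ← mul_assoc, h']
    rwa [heq] at h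
  · rw [h3, mul_pow, mul_pow, Real.sq_sqrt (by positivity), ← Real.exp_nat_mul, mul_pow,
      mul_pow √(N : ℝ), Real.sq_sqrt hN'.le]
    have : ((2 : ℕ) : ℝ) * (-(N * μ / 2) * s ^ 2) = -(μ * (N * s ^ 2)) := by push_cast; ring
    rw [this]
    field_simp

/-! ### The Dirichlet form near the saddle point -/

/-- The contribution of the edge `(x, x + e_i)` to the Dirichlet form of the test function,
normalized by the partition function and by `N e^{N F(z)}`. -/
def edgeTerm (F : E d → ℝ) (z v : E d) (μ : ℝ) (i : Fin d) (N : ℕ) (x : E d) : ℝ :=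
  Real.exp (-(1 / 2) * (N * (F x - F z) +
      N * (F (x + (N : ℝ)⁻¹ • EuclideanSpace.single i (1 : ℝ)) - F z))) *
    (N * (fGauss (N * μ)
        (∑ k, ((x + (N : ℝ)⁻¹ • EuclideanSpace.single i (1 : ℝ)) k - z k) * v k) -
      fGauss (N * μ) (∑ k, (x k - z k) * v k)) ^ 2)

lemma exists_edgeTerm_eq {F : E d → ℝ} {z v : E d} {μ : ℝ} (hμ : 0 < μ) (i : Fin d) {N : ℕ}
    (hN : 0 < N) (p : E d) :
    ∃ ξ, |ξ - ∑ k, p k * v k| ≤ |v i| / √N ∧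
      |ξ - ∑ k, (p + (√N)⁻¹ • EuclideanSpace.single i (1 : ℝ)) k * v k| ≤ |v i| / √N ∧
      edgeTerm F z v μ i N (z + (√N)⁻¹ • p) = μ / (2 * π) * v i ^ 2 *
        Real.exp (-(1 / 2) * ((N * (F (z + (√N)⁻¹ • p) - F z) + μ * ξ ^ 2) +
          (N * (F (z + (√N)⁻¹ • (p + (√N)⁻¹ • EuclideanSpace.single i (1 : ℝ))) - F z) +
            μ * ξ ^ 2))) := by
  have hN' : (0 : ℝ) < N := by exact_mod_cast hN
  have hsq : (√(N : ℝ))⁻¹ * (√N)⁻¹ = (N : ℝ)⁻¹ := by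
    rw [← mul_inv, Real.mul_self_sqrt hN'.le]
  have hx : z + (√N)⁻¹ • p + (N : ℝ)⁻¹ • EuclideanSpace.single i (1 : ℝ) =
      z + (√N)⁻¹ • (p + (√N)⁻¹ • EuclideanSpace.single i (1 : ℝ)) := by
    rw [smul_add, smul_smul, hsq, add_assoc]
  have hsingle : ∀ (t : ℝ) (q : E d), ∑ k, (q + t • EuclideanSpace.single i (1 : ℝ)) k * v k =
      (∑ k, q k * v k) + t * v i := by
    intro t q
    simp [add_mul, Finset.sum_add_distrib]
  have hr : ∀ q : E d, ∑ k, ((z + (√N)⁻¹ • q) k - z k) * v k = (√N)⁻¹ * ∑ k, q k * v k := by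
    intro q
    rw [Finset.mul_sum]
    exact Finset.sum_congr rfl fun k _ => by simp; ring
  obtain ⟨ξ, h1, h2, h3⟩ := exists_mul_fGauss_sub_sq_eq hμ hN (∑ k, p k * v k) (v i)
  refine ⟨ξ, h1, by rwa [hsingle], ?_⟩
  rw [edgeTerm, hx, hr, hr, hsingle, mul_add (√(N : ℝ))⁻¹, ← mul_assoc _ _ (v i), hsq, h3, mul_left_comm,
    ← Real.exp_add]
  congr 2
  ring

/-- Points of a box of size `ε` around `z` are at distance `O(ε)` from `z`. -/
lemma exists_norm_le_of_repr_le (b : OrthonormalBasis (Fin d) ℝ (E d)) (c : Fin d → ℝ) :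
    ∃ K, ∀ (ε : ℝ), 0 ≤ ε → ∀ q : E d, (∀ j, |b.repr q j| ≤ c j * ε) → ‖q‖ ≤ K * ε := by
  refine ⟨√(∑ j, c j ^ 2), fun ε hε q hq => ?_⟩
  refine le_of_sq_le_sq ?_ (by positivity)
  rw [mul_pow, Real.sq_sqrt (Finset.sum_nonneg fun j _ => sq_nonneg _),
    norm_sq_eq_sum_repr_sq b, Finset.sum_mul]
  refine Finset.sum_le_sum fun j _ => ?_
  rw [← mul_pow, ← sq_abs]
  exact pow_le_pow_left₀ (abs_nonneg _) (hq j) 2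

lemma eventually_norm_add_lt_of_repr_le (b : OrthonormalBasis (Fin d) ℝ (E d)) (z : E d)
    (c : Fin d → ℝ) {ε : ℕ → ℝ} (hε0 : ∀ N, 0 < ε N) (hε : Tendsto ε atTop (𝓝 0)) (i : Fin d)
    {r : ℝ} (hr : 0 < r) :
    ∀ᶠ N : ℕ in atTop, ∀ x : E d, (∀ j, |b.repr (x - z) j| ≤ c j * ε N) → ‖x - z‖ < r ∧
      ‖x + (N : ℝ)⁻¹ • EuclideanSpace.single i (1 : ℝ) - z‖ < r := by
  obtain ⟨K, hK⟩ := exists_norm_le_of_repr_le b c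
  have h1 : Tendsto (fun N : ℕ => K * ε N + (N : ℝ)⁻¹) atTop (𝓝 0) := by
    simpa using (hε.const_mul K).add tendsto_inv_atTop_nhds_zero_nat
  filter_upwards [h1.eventually_lt_const hr] with N hN x hx
  have h2 := hK _ (hε0 N).le _ hx
  have h3 : (0 : ℝ) ≤ (N : ℝ)⁻¹ := by positivity
  refine ⟨by linarith, ?_⟩
  have h4 : ‖x + (N : ℝ)⁻¹ • EuclideanSpace.single i (1 : ℝ) - z‖ ≤ ‖x - z‖ + (N : ℝ)⁻¹ := by
    rw [add_sub_right_comm]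
    refine (norm_add_le _ _).trans_eq ?_
    simp [norm_smul]
  linarith

section Limit

variable [NeZero d] {F : E d → ℝ} {z : E d} {w : Fin d → E d} {l : Fin d → ℝ} {μ : ℝ}
  {b : OrthonormalBasis (Fin d) ℝ (E d)}

lemma tendsto_edgeTerm (hF : ContDiffAt ℝ 2 F z) (hz : fderiv ℝ F z = 0) (hμ : 0 < μ)
    (hw : ∀ j i : Fin d, (∑ k : Fin d, hess F z i k * w j k) = l j * w j i)
    (hb : ∀ (p : E d) (j : Fin d), b.repr p j = ∑ i, p i * w j i)
    (h0 : l 0 = -μ) (hpos : ∀ j, j ≠ 0 → 0 < l j) (i : Fin d) {p : ℕ → E d} {u : E d}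
    (hp : Tendsto p atTop (𝓝 u)) :
    Tendsto (fun N : ℕ => edgeTerm F z (w 0) μ i N (z + (√N)⁻¹ • p N)) atTop
      (𝓝 (μ / (2 * π) * w 0 i ^ 2 *
        Real.exp (-(1 / 2) * ∑ j, |l j| * b.repr u j ^ 2))) := by
  have hp' : Tendsto (fun N : ℕ => p N + (√N)⁻¹ • EuclideanSpace.single i (1 : ℝ)) atTop
      (𝓝 u) := by
    simpa using hp.add (tendsto_inv_sqrt_natCast.smul_const (EuclideanSpace.single i (1 : ℝ)))
  have hex : ∀ N : ℕ, ∃ ξ, 0 < N → |ξ - ∑ k, p N k * w 0 k| ≤ |w 0 i| / √N ∧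
      edgeTerm F z (w 0) μ i N (z + (√N)⁻¹ • p N) = μ / (2 * π) * w 0 i ^ 2 *
        Real.exp (-(1 / 2) * ((N * (F (z + (√N)⁻¹ • p N) - F z) + μ * ξ ^ 2) +
          (N * (F (z + (√N)⁻¹ • (p N + (√N)⁻¹ • EuclideanSpace.single i (1 : ℝ))) - F z) +
            μ * ξ ^ 2))) := by
    intro N
    by_cases hN : 0 < N
    · obtain ⟨ξ, h1, -, h3⟩ := exists_edgeTerm_eq (F := F) (z := z) (v := w 0) hμ i hN (p N)
      exact ⟨ξ, fun _ => ⟨h1, h3⟩⟩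
    · exact ⟨0, fun h => absurd h hN⟩
  choose ξ hξ using hex
  have hξlim : Tendsto ξ atTop (𝓝 (b.repr u 0)) := by
    have h1 : Tendsto (fun N => ∑ k, p N k * w 0 k) atTop (𝓝 (b.repr u 0)) := by
      rw [hb]
      have hc : Continuous fun q : E d => ∑ k, q k * w 0 k := by fun_prop
      exact (hc.tendsto u).comp hp
    have h2 : Tendsto (fun N => ξ N - ∑ k, p N k * w 0 k) atTop (𝓝 0) := by
      rw [tendsto_zero_iff_abs_tendsto_zero]
      refine squeeze_zero' (Eventually.of_forall fun N => abs_nonneg _)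
        ((eventually_gt_atTop 0).mono fun N hN => (hξ N hN).1) ?_
      simpa [div_eq_mul_inv] using tendsto_inv_sqrt_natCast.const_mul |w 0 i|
    simpa using h2.add h1
  have hsum := sum_mul_sq_add_eq_sum_abs hμ h0 hpos (b.repr u)
  rw [← fderiv_fderiv_apply_eq_sum_eigenvalue hw hb] at hsum
  have hlim := (((((tendsto_mul_sub_of_fderiv_eq_zero hF hz hp).add
    ((hξlim.pow 2).const_mul μ)).add ((tendsto_mul_sub_of_fderiv_eq_zero hF hz hp').add
    ((hξlim.pow 2).const_mul μ))).const_mul (-(1 / 2))).rexp).const_mul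
      (μ / (2 * π) * w 0 i ^ 2)
  have heq : ∀ t : ℝ, (1 / 2 * t + μ * b.repr u 0 ^ 2) + (1 / 2 * t + μ * b.repr u 0 ^ 2) =
      t + 2 * μ * b.repr u 0 ^ 2 := fun t => by ring
  rw [heq, hsum] at hlim
  exact hlim.congr' ((eventually_gt_atTop 0).mono fun N hN => (hξ N hN).2.symm)

lemma exists_edgeTerm_le (hF : ContDiffAt ℝ 2 F z) (hz : fderiv ℝ F z = 0) (hμ : 0 < μ)
    (hw : ∀ j i : Fin d, (∑ k : Fin d, hess F z i k * w j k) = l j * w j i)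
    (hb : ∀ (p : E d) (j : Fin d), b.repr p j = ∑ i, p i * w j i)
    (h0 : l 0 = -μ) (hpos : ∀ j, j ≠ 0 → 0 < l j) {i : Fin d} (hwi : |w 0 i| ≤ 1) :
    ∃ r > 0, ∃ C, ∃ c > 0, ∀ N : ℕ, 0 < N → ∀ p : E d, ‖(√N)⁻¹ • p‖ < r →
      ‖(√N)⁻¹ • (p + (√N)⁻¹ • EuclideanSpace.single i (1 : ℝ))‖ < r →
      |edgeTerm F z (w 0) μ i N (z + (√N)⁻¹ • p)| ≤ C * Real.exp (-c * ‖p‖ ^ 2) := by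
  obtain ⟨c, hc, hcoer⟩ := exists_coercive hμ h0 hpos b
  obtain ⟨r, hr, hT⟩ := exists_abs_mul_sub_sub_le_of_fderiv_eq_zero hF hz (half_pos hc)
  have hkey : ∀ N : ℕ, 0 < N → ∀ (q : E d) (ξ : ℝ), ‖(√N)⁻¹ • q‖ < r →
      |ξ - ∑ k, q k * w 0 k| ≤ 1 →
      c / 2 * ‖q‖ ^ 2 - 3 * μ ≤ N * (F (z + (√N)⁻¹ • q) - F z) + μ * ξ ^ 2 := by
    intro N hN q ξ hq hξ
    have h1 := (abs_le.1 (hT N hN q hq)).1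
    rw [← hb] at hξ
    have h2 := hcoer q ξ hξ
    rw [← fderiv_fderiv_apply_eq_sum_eigenvalue hw hb] at h2
    linarith
  refine ⟨r, hr, μ / (2 * π) * w 0 i ^ 2 * Real.exp (3 * μ), c / 4, by positivity, ?_⟩
  intro N hN p hp hp'
  obtain ⟨ξ, h1, h2, h3⟩ := exists_edgeTerm_eq (F := F) (z := z) (v := w 0) hμ i hN p
  have hle : |w 0 i| / √N ≤ 1 := by
    have : 1 ≤ √(N : ℝ) := Real.one_le_sqrt.2 (by exact_mod_cast hN)
    exact (div_le_self (abs_nonneg _) this).trans hwi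
  have k1 := hkey N hN p ξ hp (h1.trans hle)
  have k2 := hkey N hN _ ξ hp' (h2.trans hle)
  rw [h3, abs_of_nonneg (by positivity), mul_assoc _ (Real.exp _) (Real.exp _), ← Real.exp_add]
  refine mul_le_mul_of_nonneg_left (Real.exp_le_exp.2 ?_) (by positivity)
  have : 0 ≤ c / 2 * ‖p + (√N)⁻¹ • EuclideanSpace.single i (1 : ℝ)‖ ^ 2 := by positivity
  linarith

lemma tendsto_tsum_edgeTerm {Ξ : Set (E d)} (hΞ : Ξ ∈ 𝓝 z)
    (hF : ContDiffAt ℝ 2 F z) (hz : fderiv ℝ F z = 0) (hμ : 0 < μ)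
    (hw : ∀ j i : Fin d, (∑ k : Fin d, hess F z i k * w j k) = l j * w j i)
    (hb : ∀ (p : E d) (j : Fin d), b.repr p j = ∑ i, p i * w j i)
    (h0 : l 0 = -μ) (hpos : ∀ j, j ≠ 0 → 0 < l j) {i : Fin d} (hwi : |w 0 i| ≤ 1)
    {c : Fin d → ℝ} (hc : ∀ j, 0 < c j) {ε : ℕ → ℝ} (hε0 : ∀ N, 0 < ε N)
    (hε : Tendsto ε atTop (𝓝 0)) (hε' : Tendsto (fun N : ℕ => √N * ε N) atTop atTop) :
    Tendsto (fun N : ℕ => (√N ^ d)⁻¹ * ∑' k : Fin d → ℤ,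
      {x | x ∈ Ξ ∧ ∀ j, |b.repr (x - z) j| ≤ c j * ε N}.indicator
        (edgeTerm F z (w 0) μ i N) (latticePoint N k)) atTop
      (𝓝 (μ / (2 * π) * w 0 i ^ 2 * ∏ j, √(2 * π / |l j|))) := by
  obtain ⟨r, hr, C, c', hc', hbound⟩ := exists_edgeTerm_le hF hz hμ hw hb h0 hpos hwi
  rw [← integral_exp_neg_sum_sq b fun j => |l j|, ← integral_const_mul]
  have hsq : ∀ N : ℕ, (√(N : ℝ))⁻¹ * (√N)⁻¹ = (N : ℝ)⁻¹ := fun N => by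
    rw [← mul_inv, Real.mul_self_sqrt (by positivity)]
  refine tendsto_tsum_latticePoint z _ _ (C := |C|) hc' ?_ ?_
  · filter_upwards [eventually_norm_add_lt_of_repr_le b z c hε0 hε i hr,
      eventually_gt_atTop 0] with N hN hN0 p
    by_cases hmem : z + (√N)⁻¹ • p ∈ {x | x ∈ Ξ ∧ ∀ j, |b.repr (x - z) j| ≤ c j * ε N}
    · rw [Set.indicator_of_mem hmem]
      obtain ⟨h1, h2⟩ := hN _ hmem.2
      rw [add_sub_cancel_left] at h1
      rw [add_assoc, add_sub_cancel_left, ← hsq, mul_smul, ← smul_add] at h2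
      exact (hbound N hN0 p h1 h2).trans
        (mul_le_mul_of_nonneg_right (le_abs_self C) (Real.exp_pos _).le)
    · rw [Set.indicator_of_notMem hmem, abs_zero]
      positivity
  · intro p u hp
    refine (tendsto_edgeTerm hF hz hμ hw hb h0 hpos i hp).congr' ?_
    have h1 : ∀ᶠ N : ℕ in atTop, z + (√N)⁻¹ • p N ∈ Ξ := by
      have : Tendsto (fun N : ℕ => z + (√N)⁻¹ • p N) atTop (𝓝 z) := by
        simpa using (tendsto_inv_sqrt_natCast.smul hp).const_add z
      exact this.eventually_mem hΞ
    have h2 : ∀ᶠ N : ℕ in atTop, ∀ j, |b.repr (p N) j| ≤ c j * (√N * ε N) := by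
      rw [eventually_all]
      intro j
      have hcont : Continuous fun q : E d => |b.repr q j| := by fun_prop
      have hb1 := ((hcont.tendsto u).comp hp).eventually_lt_const (lt_add_one _)
      filter_upwards [hb1, (hε'.const_mul_atTop (hc j)).eventually_ge_atTop
        (|b.repr u j| + 1)] with N hN1 hN2
      exact hN1.le.trans hN2
    filter_upwards [h1, h2, eventually_gt_atTop 0] with N hN1 hN2 hN0
    rw [Set.indicator_of_mem]
    refine ⟨hN1, fun j => ?_⟩
    have hs : 0 < √(N : ℝ) := by positivity
    rw [add_sub_cancel_left, map_smul, PiLp.smul_apply, smul_eq_mul, abs_mul,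
      abs_of_pos (inv_pos.2 hs), inv_mul_le_iff₀ hs]
    linarith [hN2 j]

end Limit

lemma disc_finite {Ξ : Set (E d)} (hΞ : Bornology.IsBounded Ξ) {N : ℕ} (hN : 0 < N) :
    (disc Ξ N).Finite := by
  obtain ⟨R, hR⟩ := hΞ.exists_norm_le
  have hN' : (0 : ℝ) < N := by exact_mod_cast hN
  refine ((Set.finite_Icc (fun _ : Fin d => -⌈N * R⌉) (fun _ => ⌈N * R⌉)).image
    (latticePoint N)).subset ?_
  rintro x ⟨hxΞ, hx⟩
  choose k hk using hx
  have hkR : ∀ i, |(k i : ℝ)| ≤ ⌈N * R⌉ := by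
    intro i
    have h1 := (PiLp.norm_apply_le x i).trans (hR x hxΞ)
    rw [hk i, Real.norm_eq_abs, abs_div, abs_of_pos hN', div_le_iff₀ hN', mul_comm] at h1
    exact h1.trans (Int.le_ceil _)
  have hkR' : ∀ i, |k i| ≤ ⌈N * R⌉ := fun i => by exact_mod_cast hkR i
  exact ⟨k, ⟨fun i => (abs_le.1 (hkR' i)).1, fun i => (abs_le.1 (hkR' i)).2⟩,
    by ext i; exact (hk i).symm⟩

lemma eventually_Z_pos {Ξ : Set (E d)} (hΞ : Bornology.IsBounded Ξ) {z : E d} (hz : Ξ ∈ 𝓝 z)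
    (F : E d → ℝ) : ∀ᶠ N : ℕ in atTop, 0 < Z Ξ F N := by
  obtain ⟨r, hr, hball⟩ := Metric.mem_nhds_iff.1 hz
  have hlim : Tendsto (fun N : ℕ => √(d : ℝ) * (N : ℝ)⁻¹) atTop (𝓝 0) := by
    simpa using tendsto_inv_atTop_nhds_zero_nat.const_mul √(d : ℝ)
  filter_upwards [hlim.eventually_lt_const hr, eventually_gt_atTop 0] with N hN hN0
  have hs : 0 < √(N : ℝ) := by positivity
  have hmem : z + (√N)⁻¹ • scaledFloor z N 0 ∈ disc Ξ N := by
    refine ⟨hball ?_, ?_⟩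
    · rw [mem_ball_iff_norm, add_sub_cancel_left, norm_smul, norm_inv,
        Real.norm_of_nonneg hs.le]
      have h := norm_scaledFloor_sub_le z hN0 0
      rw [sub_zero] at h
      refine lt_of_le_of_lt ?_ hN
      calc (√(N : ℝ))⁻¹ * ‖scaledFloor z N 0‖ ≤ (√(N : ℝ))⁻¹ * (√d / √N) := by gcongr
        _ = √(d : ℝ) * (√(N : ℝ) * √N)⁻¹ := by field_simp
        _ = √(d : ℝ) * (N : ℝ)⁻¹ := by rw [Real.mul_self_sqrt (by positivity)]
    · rw [add_inv_sqrt_smul_scaledFloor z hN0]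
      exact isLatticePoint_latticePoint _ _
  have := (disc_finite hΞ hN0).to_subtype
  exact (Summable.of_finite).tsum_pos (fun x => (Real.exp_pos _).le) ⟨_, hmem⟩ (Real.exp_pos _)

lemma gibbs_mul_rate_mul_sq_eq {Ξ : Set (E d)} {F : E d → ℝ} {z v : E d} {μ : ℝ} {i : Fin d}
    {N : ℕ} (hN : 0 < N) (hZ : 0 < Z Ξ F N) {x : E d} (hx : x ∈ disc Ξ N)
    (hx' : x + (N : ℝ)⁻¹ • EuclideanSpace.single i (1 : ℝ) ∈ Ξ) :
    gibbs Ξ F N x * rate Ξ F N x (x + (N : ℝ)⁻¹ • EuclideanSpace.single i (1 : ℝ)) *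
      (fGauss (N * μ) (∑ k, ((x + (N : ℝ)⁻¹ • EuclideanSpace.single i (1 : ℝ)) k - z k) * v k) -
        fGauss (N * μ) (∑ k, (x k - z k) * v k)) ^ 2 =
      (Z Ξ F N * N * Real.exp (N * F z))⁻¹ * edgeTerm F z v μ i N x := by
  have hN' : (N : ℝ) ≠ 0 := by positivity
  have hlat : IsLatticePoint N (x + (N : ℝ)⁻¹ • EuclideanSpace.single i (1 : ℝ)) := by
    intro j
    obtain ⟨k, hk⟩ := hx.2 j
    refine ⟨k + if j = i then 1 else 0, ?_⟩
    rw [PiLp.add_apply, hk]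
    by_cases hij : j = i <;> simp [hij, add_div]
  have hnorm : ‖x + (N : ℝ)⁻¹ • EuclideanSpace.single i (1 : ℝ) - x‖ = 1 / N := by
    simp [norm_smul]
  rw [rate, if_pos ⟨hx, ⟨hx', hlat⟩, hnorm⟩, gibbs, edgeTerm]
  set y := x + (N : ℝ)⁻¹ • EuclideanSpace.single i (1 : ℝ)
  have hexp : Real.exp (-(N : ℝ) * F x) * Real.exp (-(N : ℝ) / 2 * (F y - F x)) *
      Real.exp (N * F z) =
        Real.exp (-(1 / 2) * (N * (F x - F z) + N * (F y - F z))) := by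
    rw [← Real.exp_add, ← Real.exp_add]
    congr 1
    ring
  rw [← hexp]
  field_simp


lemma exists_eq_one_add_mul_of_tendsto {a : ℕ → ℝ} {ω : ℝ} (hω : ω ≠ 0)
    (h : Tendsto a atTop (𝓝 ω)) :
    ∃ err : ℕ → ℝ, Tendsto err atTop (𝓝 0) ∧ ∀ N, a N = (1 + err N) * ω :=
  ⟨fun N => a N / ω - 1, by simpa [div_self hω] using (h.div_const ω).sub_const 1,
    fun N => by rw [add_sub_cancel, div_mul_cancel₀ _ hω]⟩

/-- **Assertion 3.2 (vs02).**  If `N^{-1/2} ≪ ε_N ≪ N^{-1/3}`, then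
`(Z_N/(2πN)^{d/2}) 2πN e^{N F(z)} D_N(V_N; B_N) = [1+o_N(1)] μ/√(-det Hess F(z))`,
where `B_N` is the mesoscopic box around the saddle point `z` and
`V_N(x) = f_N((x-z)·v)`. -/
theorem dirichlet_form_test_function (d : ℕ) [NeZero d] (P : PotentialSetting d)
    (z : E d) (hz : z ∈ saddles P.Ξ P.F)
    (w : Fin d → E d) (lam' : Fin d → ℝ)
    (hw_eigen : ∀ j i : Fin d,
      (∑ k : Fin d, hess P.F z i k * w j k) = lam' j * w j i)
    (hw_on : ∀ j k : Fin d, (∑ i : Fin d, w j i * w k i) = if j = k then 1 else 0)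
    (hlam0 : lam' 0 = -(P.μs z))
    (hlam_pos : ∀ j : Fin d, j ≠ 0 → 0 < lam' j)
    (εs : ℕ → ℝ) (hεpos : ∀ N, 0 < εs N)
    (hε1 : Filter.Tendsto (fun N : ℕ => Real.sqrt N * εs N) Filter.atTop Filter.atTop)
    (hε2 : Filter.Tendsto (fun N : ℕ => (N : ℝ) ^ ((1:ℝ)/3) * εs N) Filter.atTop (𝓝 0)) :
    ∃ err : ℕ → ℝ, Filter.Tendsto err Filter.atTop (𝓝 0) ∧ ∀ N : ℕ,
      Z P.Ξ P.F N / (2 * π * N) ^ ((d : ℝ) / 2) * (2 * π * N) * Real.exp (N * P.F z) *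
        dirichletRestricted P.Ξ P.F N
          (fun x => fGauss ((N : ℝ) * P.μs z) (∑ i : Fin d, (x i - z i) * w 0 i))
          {x ∈ disc P.Ξ N | |∑ i : Fin d, (x i - z i) * w 0 i| ≤ εs N ∧
            ∀ j : Fin d, j ≠ 0 →
              |∑ i : Fin d, (x i - z i) * w j i| ≤ 2 * Real.sqrt (P.μs z / lam' j) * εs N}
      = (1 + err N) * (P.μs z / Real.sqrt (-(hess P.F z).det)) := by
  have hzΞ : P.Ξ ∈ 𝓝 z := P.isOpen.mem_nhds hz.1
  have hF : ContDiffAt ℝ 2 P.F z :=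
    P.smooth.contDiffAt (Filter.mem_of_superset hzΞ subset_closure)
  have hfd : fderiv ℝ P.F z = 0 := hz.2.1
  have hμ : 0 < P.μs z := (P.saddleHess z hz).1
  obtain ⟨b, hb⟩ := exists_orthonormalBasis_repr hw_on
  have hunit : ∑ i, w 0 i ^ 2 = 1 := by simpa [pow_two] using hw_on 0 0
  have hwi : ∀ i, |w 0 i| ≤ 1 := fun i => by
    rw [← sq_le_one_iff_abs_le_one, ← hunit]
    exact Finset.single_le_sum (f := fun i => w 0 i ^ 2) (fun j _ => sq_nonneg _)
      (Finset.mem_univ i)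
  have hlam_ne : ∀ j, lam' j ≠ 0 := fun j => by
    rcases eq_or_ne j 0 with rfl | h
    · rw [hlam0]; exact (neg_neg_of_pos hμ).ne
    · exact (hlam_pos j h).ne'
  have hdet : -(hess P.F z).det = ∏ j, |lam' j| := by
    rw [det_eq_prod_of_orthonormal_eigenvectors hw_eigen hw_on,
      neg_prod_eq_prod_abs hμ hlam0 hlam_pos]
  have hdet_pos : 0 < -(hess P.F z).det := by
    rw [hdet]
    exact Finset.prod_pos fun j _ => abs_pos.2 (hlam_ne j)
  have hε : Tendsto εs atTop (𝓝 0) := by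
    refine squeeze_zero' (Eventually.of_forall fun N => (hεpos N).le) ?_ hε2
    filter_upwards [eventually_ge_atTop 1] with N hN
    exact le_mul_of_one_le_left (hεpos N).le
      (Real.one_le_rpow (by exact_mod_cast hN) (by norm_num))
  set c : Fin d → ℝ := fun j => if j = 0 then 1 else 2 * √(P.μs z / lam' j) with hc
  have hc_pos : ∀ j, 0 < c j := fun j => by
    by_cases h : j = 0
    · simp [hc, h]
    · have := hlam_pos j h
      simp only [hc, h, if_false]
      positivity
  have hbox : ∀ (N : ℕ) (x : E d), (|∑ i : Fin d, (x i - z i) * w 0 i| ≤ εs N ∧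
      ∀ j : Fin d, j ≠ 0 → |∑ i : Fin d, (x i - z i) * w j i| ≤
        2 * √(P.μs z / lam' j) * εs N) ↔ ∀ j, |b.repr (x - z) j| ≤ c j * εs N := by
    intro N x
    simp only [hb, PiLp.sub_apply]
    constructor
    · rintro ⟨h1, h2⟩ j
      by_cases h : j = 0
      · subst h
        simpa [hc] using h1
      · simpa [hc, h] using h2 j h
    · intro h
      refine ⟨by simpa [hc] using h 0, fun j hj => by simpa [hc, hj] using h j⟩
  set S : ℕ → Fin d → ℝ := fun N i => (√N ^ d)⁻¹ * ∑' k : Fin d → ℤ,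
      {x | x ∈ P.Ξ ∧ ∀ j, |b.repr (x - z) j| ≤ c j * εs N}.indicator
        (edgeTerm P.F z (w 0) (P.μs z) i N) (latticePoint N k) with hS
  set ω := P.μs z / √(-(hess P.F z).det) with hω
  have hω_ne : ω ≠ 0 := (div_pos hμ (Real.sqrt_pos.2 hdet_pos)).ne'
  have hlimS : Tendsto (fun N => 2 * π * (√(2 * π) ^ d)⁻¹ * ∑ i, S N i) atTop (𝓝 ω) := by
    have h := (tendsto_finsetSum Finset.univ fun i _ =>
      tendsto_tsum_edgeTerm hzΞ hF hfd hμ hw_eigen hb hlam0 hlam_pos (hwi i) hc_pos hεpos hε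
        hε1).const_mul (2 * π * (√(2 * π) ^ d)⁻¹)
    have hval : 2 * π * (√(2 * π) ^ d)⁻¹ *
        ∑ i, P.μs z / (2 * π) * w 0 i ^ 2 * ∏ j, √(2 * π / |lam' j|) = ω := by
      have hprod : ∏ j, √(2 * π / |lam' j|) = √(2 * π) ^ d / √(∏ j, |lam' j|) := by
        rw [← Real.sqrt_prod _ fun j _ => by positivity, Finset.prod_div_distrib,
          Real.sqrt_div (by positivity)]
        simp [Real.sqrt_eq_rpow, Real.rpow_natCast_mul, ← Real.rpow_mul_natCast, mul_comm,
          Real.pi_pos.le]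
      rw [← Finset.sum_mul, ← Finset.mul_sum, hunit, hprod, ← hdet, hω]
      have h1 : √(2 * π) ≠ 0 := by positivity
      field_simp
    rwa [hval] at h
  have hZ := eventually_Z_pos P.isBounded hzΞ P.F
  obtain ⟨r, hr, hball⟩ := Metric.mem_nhds_iff.1 hzΞ
  have hnear := eventually_all.2 fun i =>
    eventually_norm_add_lt_of_repr_le b z c hεpos hε i hr
  refine exists_eq_one_add_mul_of_tendsto hω_ne ?_
  refine hlimS.congr' ?_
  filter_upwards [hZ, hnear, eventually_gt_atTop 0] with N hZN hN hN0
  have hN' : (0 : ℝ) < N := by exact_mod_cast hN0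
  have hterm : ∀ i : Fin d, ∑' x : {x ∈ disc P.Ξ N | |∑ i : Fin d, (x i - z i) * w 0 i| ≤ εs N ∧
      ∀ j : Fin d, j ≠ 0 →
        |∑ i : Fin d, (x i - z i) * w j i| ≤ 2 * Real.sqrt (P.μs z / lam' j) * εs N},
      gibbs P.Ξ P.F N (x : E d) *
        rate P.Ξ P.F N (x : E d) ((x : E d) + (N : ℝ)⁻¹ • EuclideanSpace.single i (1:ℝ)) *
        (fGauss ((N : ℝ) * P.μs z)
          (∑ k, (((x : E d) + (N : ℝ)⁻¹ • EuclideanSpace.single i (1:ℝ)) k - z k) * w 0 k) -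
        fGauss ((N : ℝ) * P.μs z) (∑ k, ((x : E d) k - z k) * w 0 k)) ^ 2 =
      (Z P.Ξ P.F N * N * Real.exp (N * P.F z))⁻¹ * (√N ^ d * S N i) := by
    intro i
    rw [hS]
    dsimp only
    rw [mul_inv_cancel_left₀ (by positivity)]
    simp_rw [← hbox]
    rw [← tsum_disc_eq_tsum_latticePoint P.Ξ hN0, ← tsum_mul_left]
    refine tsum_congr fun x => gibbs_mul_rate_mul_sq_eq hN0 hZN x.2.1 (hball ?_)
    rw [mem_ball_iff_norm]
    exact (hN i x ((hbox N x).1 x.2.2)).2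
  have hsum : ∑ i, (Z P.Ξ P.F N * N * Real.exp (N * P.F z))⁻¹ * (√N ^ d * S N i) =
      (Z P.Ξ P.F N * N * Real.exp (N * P.F z))⁻¹ * (√N ^ d * ∑ i, S N i) := by
    simp only [Finset.mul_sum]
  rw [dirichletRestricted, Finset.sum_congr rfl fun i _ => hterm i, hsum]
  have hpow : (2 * π * N) ^ ((d : ℝ) / 2) = √(2 * π) ^ d * √N ^ d := by
    rw [← mul_pow, ← Real.sqrt_mul (by positivity), Real.sqrt_eq_rpow,
      ← Real.rpow_mul_natCast (by positivity)]
    congr 1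
    ring
  rw [hpow]
  have h1 : √(2 * π) ≠ 0 := by positivity
  have h2 : √(N : ℝ) ≠ 0 := by positivity
  generalize ∑ i, S N i = T
  field_simp

end RWPotential
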